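/- Let G ↷ X be a minimal expansive action of a countably infinite group on a compact metrizable space. Then G ↷ X has the topological Markov property if and only if it has no off-diagonal asymptotic pairs. -/

import Mathlib

open Pointwise

/-- Supremum over `g ∈ K` of `ρ (g • x) (g • y)`. -/
noncomputable def supOf {G X : Type*} [SMul G X] (ρ : X → X → ℝ) (K : Set G) (x y : X) : ℝ :=
  ⨆ g : K, ρ ((g : G) • x) ((g : G) • y)

/-- `d_K(x,y) = sup_{g ∈ K} d(g x, g y)`. -/
noncomputable def supD {G X : Type*} [SMul G X] [PseudoMetricSpace X] (K : Set G) (x y : X) : ℝ :=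
  supOf dist K x y

/-- `B` is an `(ε,δ)`-memory set for `A`. -/
def IsMemorySet (G X : Type*) [SMul G X] [PseudoMetricSpace X] (ε δ : ℝ)
    (A B : Finset G) : Prop :=
  (A : Set G) ⊆ (B : Set G) ∧
    ∀ x y : X, supD ((B : Set G) \ (A : Set G)) x y ≤ δ →
      ∃ z : X, supD (B : Set G) x z ≤ ε ∧ supD (Set.univ \ (A : Set G)) y z ≤ ε

/-- The topological Markov property. -/
def TMP (G X : Type*) [SMul G X] [PseudoMetricSpace X] : Prop :=
  ∀ ε > (0 : ℝ), ∃ δ > (0 : ℝ), ∀ A : Finset G, ∃ B : Finset G, IsMemorySet G X ε δ A B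

/-- The strong topological Markov property. -/
def StrongTMP (G X : Type*) [Group G] [DecidableEq G] [MulAction G X]
    [PseudoMetricSpace X] : Prop :=
  ∀ ε > (0 : ℝ), ∃ δ > (0 : ℝ), ∃ F : Finset G, (1 : G) ∈ F ∧
    ∀ A : Finset G, IsMemorySet G X ε δ A (F * A)

/-- `V` is `B`-separated. -/
def Separated {G : Type*} [Mul G] (B V : Set G) : Prop :=
  ∀ v₁ ∈ V, ∀ v₂ ∈ V, v₁ ≠ v₂ → Disjoint (B * ({v₁} : Set G)) (B * ({v₂} : Set G))

/-- `B` is a uniform `(ε,δ)`-memory set for `A`. -/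
def IsUniformMemorySet (G X : Type*) [Group G] [MulAction G X] [PseudoMetricSpace X]
    (ε δ : ℝ) (A B : Finset G) : Prop :=
  IsMemorySet G X ε δ A B ∧
    ∀ V : Finset G, Separated (B : Set G) (V : Set G) →
      ∀ (xv : G → X) (y : X),
        (∀ v ∈ V, supD (((B : Set G) \ (A : Set G)) * ({v} : Set G)) (xv v) y ≤ δ) →
        ∃ z : X, (∀ v ∈ V, supD ((B : Set G) * ({v} : Set G)) z (xv v) ≤ ε) ∧
          supD (Set.univ \ ((A : Set G) * (V : Set G))) z y ≤ ε

/-- The uniform topological Markov property. -/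
def UniformTMP (G X : Type*) [Group G] [MulAction G X] [PseudoMetricSpace X] : Prop :=
  ∀ ε > (0 : ℝ), ∃ δ > (0 : ℝ), ∀ A : Finset G, ∃ B : Finset G,
    IsUniformMemorySet G X ε δ A B

/-- The uniform strong topological Markov property. -/
def UniformStrongTMP (G X : Type*) [Group G] [DecidableEq G] [MulAction G X]
    [PseudoMetricSpace X] : Prop :=
  ∀ ε > (0 : ℝ), ∃ δ > (0 : ℝ), ∃ F : Finset G, (1 : G) ∈ F ∧
    ∀ A : Finset G, IsUniformMemorySet G X ε δ A (F * A)

/-- Expansivity of the action. -/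
def Expansive (G X : Type*) [SMul G X] [PseudoMetricSpace X] : Prop :=
  ∃ c > (0 : ℝ), ∀ x y : X, x ≠ y → ∃ g : G, dist (g • x) (g • y) > c

/-- `(x,y)` is an asymptotic pair. -/
def Asymptotic (G : Type*) {X : Type*} [SMul G X] [PseudoMetricSpace X] (x y : X) : Prop :=
  ∀ ε > (0 : ℝ), ∃ F : Finset G, ∀ g ∉ F, dist (g • x) (g • y) ≤ ε

/-- `(S,δ)` pseudo-orbit. -/
def IsPseudoOrbit {G X : Type*} [Mul G] [SMul G X] [PseudoMetricSpace X]
    (S : Finset G) (δ : ℝ) (w : G → X) : Prop :=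
  ∀ s ∈ S, ∀ g : G, dist (s • w g) (w (s * g)) < δ

/-- `w` is `ε`-traced by `x`. -/
def Traces {G X : Type*} [SMul G X] [PseudoMetricSpace X] (ε : ℝ) (x : X) (w : G → X) : Prop :=
  ∀ g : G, dist (g • x) (w g) ≤ ε

/-- Pseudo-orbit tracing property. -/
def POTP (G X : Type*) [Mul G] [SMul G X] [PseudoMetricSpace X] : Prop :=
  ∀ ε > (0 : ℝ), ∃ δ > (0 : ℝ), ∃ S : Finset G, ∀ w : G → X,
    IsPseudoOrbit S δ w → ∃ x : X, Traces ε x w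

/-- `J` is an independence set for the tuple `U`. -/
def IndepSet {G X : Type*} [SMul G X] {n : ℕ} (U : Fin n → Set X) (J : Set G) : Prop :=
  ∀ I : Finset G, (I : Set G) ⊆ J → I.Nonempty → ∀ φ : G → Fin n,
    (⋂ s ∈ I, (fun x : X => s • x) ⁻¹' U (φ s)).Nonempty

/-- The tuple `U` has positive independence density. -/
def PosIndepDensity (G : Type*) {X : Type*} [SMul G X] {n : ℕ} (U : Fin n → Set X) : Prop :=
  ∃ q > (0 : ℝ), ∀ F : Finset G, ∃ J : Finset G, J ⊆ F ∧
    q * (F.card : ℝ) ≤ (J.card : ℝ) ∧ IndepSet U (J : Set G)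

/-- Orbit IE-tuple. -/
def IETuple (G : Type*) {X : Type*} [SMul G X] [TopologicalSpace X] {n : ℕ}
    (x : Fin n → X) : Prop :=
  ∀ U : Fin n → Set X, (∀ i, IsOpen (U i)) → (∀ i, x i ∈ U i) → PosIndepDensity G U

/-- Minimality of the action. -/
def MinimalAction (G X : Type*) [SMul G X] [TopologicalSpace X] : Prop :=
  ∀ Y : Set X, IsClosed Y → (∀ g : G, ∀ y ∈ Y, g • y ∈ Y) → Y.Nonempty → Y = Set.univ

/-- Følner sequence. -/
def FolnerSeq (G : Type*) [Group G] [DecidableEq G] (F : ℕ → Finset G) : Prop :=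
  (∀ n, (F n).Nonempty) ∧
    ∀ K : Finset G, Filter.Tendsto
      (fun n => ((symmDiff (K * F n) (F n)).card : ℝ) / ((F n).card : ℝ))
      Filter.atTop (nhds 0)

/-!
Let `(x, y)` be an asymptotic pair with `x ≠ y`. Wherever the orbit of a point `z` comes close to
`x` along a large window, the Markov property pastes in the pattern of `y`. Pasting at many
separated places one after another does not accumulate errors: the configuration pasted so far is a
pseudo-orbit, and by expansivity any point tracing it roughly already traces it finely. Separated
visits of `z` to a neighbourhood of `x` can therefore be recoloured independently with `x` and `y`.

By minimality there is, for each `n`, a window of `O(n)` elements containing `n` separated visits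
of every orbit. The `2 ^ n` colourings of these visits outnumber the `O(n ^ 2)` relative positions
of two overlapping windows, so each window of a separated family can receive a colouring that `x`
shows at none of these positions. When the family is maximal in a large finite set `W`, the
resulting orbit does not approach `x` during `W`, which contradicts minimality.

Conversely, two points close to each other off a finite set `A` are asymptotic by expansivity, so
without off-diagonal asymptotic pairs they are equal. By compactness, being close on a suitable
finite set disjoint from `A` then forces closeness on `A`, and `z = y` witnesses the memory
property.
-/

section Separated

variable {G : Type*} [Group G]

lemma separated_iff {B V : Set G} :
    Separated B V ↔ ∀ v ∈ V, ∀ w ∈ V, ∀ a ∈ B, ∀ b ∈ B, a * v = b * w → v = w := by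
  simp only [Separated, Set.disjoint_left, Set.mul_singleton, Set.mem_image, not_exists, not_and]
  refine ⟨fun h v hv w hw a ha b hb hab => ?_, fun h v hv w hw hne g ⟨a, ha, hag⟩ b hb hbg => ?_⟩
  · by_contra hne
    exact h v hv w hw hne ⟨a, ha, rfl⟩ b hb hab.symm
  · exact hne (h v hv w hw a ha b hb (hag.trans hbg.symm))

lemma Separated.eq_of_mul_eq {B V : Set G} (h : Separated B V) {v w a b : G} (hv : v ∈ V)
    (hw : w ∈ V) (ha : a ∈ B) (hb : b ∈ B) (hab : a * v = b * w) : v = w :=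
  separated_iff.1 h v hv w hw a ha b hb hab

lemma Separated.mono {B B' V V' : Set G} (h : Separated B V) (hB : B' ⊆ B) (hV : V' ⊆ V) :
    Separated B' V' :=
  fun v hv w hw hne => (h v (hV hv) w (hV hw) hne).mono (Set.mul_subset_mul_right hB)
    (Set.mul_subset_mul_right hB)

lemma Separated.mul_notMem_mul {B V D S : Set G} (hV : Separated B V) (hSV : S ⊆ V)
    (hDB : D ⊆ B) {b v : G} (hb : b ∈ B) (hv : v ∈ V) (h : b ∉ D ∨ v ∉ S) : b * v ∉ D * S := by
  rintro ⟨d, hd, s, hs, heq⟩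
  obtain rfl := hV.eq_of_mul_eq (hSV hs) hv (hDB hd) hb heq
  obtain rfl := mul_right_cancel heq
  exact h.elim (· hd) (· hs)

lemma Separated.insert {B V : Set G} (h : Separated B V) {g : G}
    (hg : ∀ v ∈ V, ∀ a ∈ B, ∀ b ∈ B, a * g ≠ b * v) : Separated B (insert g V) := by
  rw [separated_iff]
  rintro v (rfl | hv) w (rfl | hw) a ha b hb hab
  · rfl
  · exact absurd hab (hg w hw a ha b hb)
  · exact absurd hab.symm (hg v hv b hb a ha)
  · exact h.eq_of_mul_eq hv hw ha hb hab

lemma Separated.iUnion_mul_singleton {B R V : Set G} {Q : G → Set G} (hV : Separated (B * R) V)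
    (hQR : ∀ v ∈ V, Q v ⊆ R) (hQ : ∀ v ∈ V, Separated B (Q v)) :
    Separated B (⋃ v ∈ V, Q v * {v}) := by
  simp only [separated_iff, Set.mem_iUnion₂]
  rintro _ ⟨v, hv, r, hr, _, rfl, rfl⟩ _ ⟨w, hw, s, hs, _, rfl, rfl⟩ a ha b hb hab
  simp only [← mul_assoc] at hab
  obtain rfl := hV.eq_of_mul_eq hv hw (Set.mul_mem_mul ha (hQR _ hv hr))
    (Set.mul_mem_mul hb (hQR _ hw hs)) hab
  rw [(hQ _ hv).eq_of_mul_eq hr hs ha hb (mul_right_cancel hab)]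

lemma exists_separated_cover [DecidableEq G] {M : Finset G} (hM : M.Nonempty)
    (W : Finset G) :
    ∃ V : Finset G, Separated (M : Set G) V ∧ ∀ g ∈ W, ∃ h ∈ M⁻¹ * M, h * g ∈ V := by
  classical
  obtain ⟨V, -, hV⟩ := Finset.exists_le_maximal (a := (∅ : Finset G))
    {V ∈ W.powerset | Separated (M : Set G) (V : Set G)} (by simp [Separated])
  obtain ⟨hVW, hVsep⟩ : V ⊆ W ∧ Separated (M : Set G) (V : Set G) := by
    simpa only [Finset.mem_filter, Finset.mem_powerset] using hV.prop
  refine ⟨V, hVsep, fun g hg => ?_⟩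
  by_contra! hgV
  have hins : Separated (M : Set G) (insert g V) := by
    refine hVsep.insert fun v hv a ha b hb hab => ?_
    refine hgV (b⁻¹ * a) (Finset.mul_mem_mul (Finset.inv_mem_inv hb) ha) ?_
    rwa [mul_assoc, hab, inv_mul_cancel_left]
  have hgmem : g ∈ V := hV.le_of_ge (by simp [Finset.insert_subset_iff, hg, hVW, hins])
    (Finset.subset_insert g V) (Finset.mem_insert_self g V)
  obtain ⟨m, hm⟩ := hM
  exact hgV 1 (by simpa using Finset.mul_mem_mul (Finset.inv_mem_inv hm) hm) (by simpa using hgmem)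

lemma exists_separated_card_eq [Infinite G] {M : Finset G} (hM : M.Nonempty) (n : ℕ) :
    ∃ T : Finset G, Separated (M : Set G) T ∧ T.card = n := by
  classical
  obtain ⟨W, hW⟩ := Infinite.exists_subset_card_eq G ((M⁻¹ * M).card * n)
  obtain ⟨V, hVsep, hVW⟩ := exists_separated_cover hM W
  have hcover : W ⊆ (M⁻¹ * M)⁻¹ * V := fun g hg => by
    obtain ⟨h, hh, hhg⟩ := hVW g hg
    simpa using Finset.mul_mem_mul (Finset.inv_mem_inv hh) hhg
  have hcard : (M⁻¹ * M).card * n ≤ (M⁻¹ * M).card * V.card := by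
    simpa [hW] using (Finset.card_le_card hcover).trans Finset.card_mul_le
  have hn : n ≤ V.card := le_of_mul_le_mul_left hcard (hM.inv.mul hM).card_pos
  obtain ⟨T, hTV, hT⟩ := Finset.exists_subset_card_eq hn
  exact ⟨T, hVsep.mono subset_rfl (Finset.coe_subset.2 hTV), hT⟩

end Separated

section Counting

lemma exists_subset_forall_ne {ι α : Type*} {H : Finset ι} {Q : Finset α}
    (hcard : H.card < 2 ^ Q.card) (f : ι → Finset α) : ∃ C ⊆ Q, ∀ h ∈ H, C ≠ f h := by
  classical
  have hlt : (H.image f).card < Q.powerset.card := by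
    rw [Finset.card_powerset]
    exact Finset.card_image_le.trans_lt hcard
  obtain ⟨C, hCQ, hC⟩ := Finset.exists_mem_notMem_of_card_lt_card hlt
  refine ⟨C, Finset.mem_powerset.1 hCQ, ?_⟩
  rintro h hh rfl
  exact hC (Finset.mem_image_of_mem f hh)

lemma exists_pos_mul_sq_lt_two_pow (C : ℕ) : ∃ n : ℕ, 0 < n ∧ C * n ^ 2 < 2 ^ n := by
  have hlim := (tendsto_pow_const_div_const_pow_of_one_lt 2 (one_lt_two (α := ℝ))).const_mul (C : ℝ)
  rw [mul_zero] at hlim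
  obtain ⟨n, hn, hpos⟩ :=
    ((hlim.eventually_lt_const one_pos).and (Filter.eventually_gt_atTop 0)).exists
  rw [← mul_div_assoc, div_lt_one (by positivity)] at hn
  exact ⟨n, hpos, mod_cast hn⟩

end Counting

section Metric

variable {G X : Type*}

lemma supD_le_iff [SMul G X] [PseudoMetricSpace X] [BoundedSpace X] {K : Set G} {x y : X} {ε : ℝ}
    (hε : 0 ≤ ε) : supD K x y ≤ ε ↔ ∀ g ∈ K, dist (g • x) (g • y) ≤ ε := by
  have hbdd : BddAbove (Set.range fun g : K => dist ((g : G) • x) ((g : G) • y)) := by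
    refine ⟨Metric.diam (Set.univ : Set X), ?_⟩
    rintro _ ⟨g, rfl⟩
    exact Metric.dist_le_diam_of_mem (Bornology.IsBounded.all _) trivial trivial
  exact ⟨fun h g hg => (le_ciSup hbdd ⟨g, hg⟩).trans h, fun h => Real.iSup_le (fun g => h g g.2) hε⟩

lemma isOpen_forall_dist_smul_lt [SMul G X] [PseudoMetricSpace X] [ContinuousConstSMul G X]
    (B : Finset G) (ε : ℝ) :
    IsOpen {p : X × X | ∀ b ∈ B, dist (b • p.1) (b • p.2) < ε} := by
  simp only [Set.ofPred_forall]
  exact isOpen_biInter_finset fun b _ => isOpen_lt (by fun_prop) continuous_const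

lemma exists_finset_forall_dist_smul_le_mem [SMul G X] [PseudoMetricSpace X] [CompactSpace X]
    [ContinuousConstSMul G X] {I : Set G} {r : ℝ} {U : Set (X × X)} (hU : IsOpen U)
    (h : ∀ p q : X, (∀ g ∈ I, dist (g • p) (g • q) ≤ r) → (p, q) ∈ U) :
    ∃ F : Finset G, (F : Set G) ⊆ I ∧
      ∀ p q : X, (∀ g ∈ F, dist (g • p) (g • q) ≤ r) → (p, q) ∈ U := by
  obtain ⟨F, hFI, hfin, hF⟩ := hU.isClosed_compl.isCompact.elim_finite_subcover_image (b := I)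
    (c := fun g => {p : X × X | r < dist (g • p.1) (g • p.2)})
    (fun g _ => isOpen_lt continuous_const (by fun_prop)) (fun p hp => by
      by_contra hI
      simp only [Set.mem_iUnion, Set.mem_ofPred_eq, not_exists, not_lt] at hI
      exact hp (h p.1 p.2 hI))
  lift F to Finset G using hfin
  refine ⟨F, hFI, fun p q hpq => ?_⟩
  by_contra hpU
  obtain ⟨g, hg, hlt⟩ := Set.mem_iUnion₂.1 (hF hpU)
  exact (hpq g hg).not_gt hlt

end Metric

section Minimal

variable {G X : Type*} [Group G] [TopologicalSpace X] [MulAction G X] [ContinuousConstSMul G X]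

lemma MinimalAction.isMinimal (h : MinimalAction G X) : MulAction.IsMinimal G X := by
  refine (isMinimal_iff_isClosed_smul_invariant G).2 fun s hs hinv => ?_
  exact s.eq_empty_or_nonempty.imp_right
    (h s hs fun g y hy => hinv g (Set.smul_mem_smul_set hy))

variable [CompactSpace X] [MulAction.IsMinimal G X]

lemma exists_finset_forall_exists_smul_mem {U : Set X} (hU : IsOpen U) (hne : U.Nonempty) :
    ∃ K : Finset G, ∀ p : X, ∃ k ∈ K, k • p ∈ U := by
  obtain ⟨K, hK⟩ := isCompact_univ.elim_finite_subcover (fun g : G => (g • ·) ⁻¹' U)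
    (fun g => hU.preimage (continuous_const_smul g)) (hU.iUnion_preimage_smul G hne).ge
  exact ⟨K, fun p => by simpa using hK (Set.mem_univ p)⟩

lemma exists_finset_separated_returns [DecidableEq G] [Infinite G] {U : Set X} (hU : IsOpen U)
    (hne : U.Nonempty) {B : Finset G} (hB : B.Nonempty) :
    ∃ R : Finset G, R.Nonempty ∧ ∀ p : X, ∃ Q ⊆ R, Separated (B : Set G) Q ∧
      (∀ q ∈ Q, q • p ∈ U) ∧ ((B * R)⁻¹ * (B * R)).card < 2 ^ Q.card := by
  obtain ⟨K, hK⟩ := exists_finset_forall_exists_smul_mem (G := G) hU hne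
  choose k hkK hkU using hK
  have hKne : K.Nonempty := ⟨_, hkK hne.some⟩
  obtain ⟨n, hn0, hn⟩ := exists_pos_mul_sq_lt_two_pow ((B.card * K.card) ^ 2)
  obtain ⟨T, hTsep, hTcard⟩ := exists_separated_card_eq (hB.mul hKne) n
  have hBR : (B * (K * T)).card ≤ B.card * K.card * n :=
    calc (B * (K * T)).card ≤ B.card * (K * T).card := Finset.card_mul_le
      _ ≤ B.card * (K.card * n) := by gcongr; exact hTcard ▸ Finset.card_mul_le
      _ = B.card * K.card * n := (mul_assoc _ _ _).symm
  have hcard : ((B * (K * T))⁻¹ * (B * (K * T))).card < 2 ^ n :=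
    calc ((B * (K * T))⁻¹ * (B * (K * T))).card ≤ (B * (K * T)).card * (B * (K * T)).card := by
          simpa only [Finset.card_inv] using Finset.card_mul_le (s := (B * (K * T))⁻¹)
      _ ≤ (B.card * K.card * n) * (B.card * K.card * n) := Nat.mul_le_mul hBR hBR
      _ = (B.card * K.card) ^ 2 * n ^ 2 := by ring
      _ < 2 ^ n := hn
  have hTne : T.Nonempty := Finset.card_pos.1 (hTcard ▸ hn0)
  refine ⟨K * T, hKne.mul hTne, fun p => ?_⟩
  have hret : ∀ t ∈ T, ∀ t' ∈ T, ∀ a ∈ B, ∀ b ∈ B,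
      a * (k (t • p) * t) = b * (k (t' • p) * t') → t = t' := by
    intro t ht t' ht' a ha b hb hab
    rw [← mul_assoc, ← mul_assoc] at hab
    exact hTsep.eq_of_mul_eq ht ht' (Finset.mul_mem_mul ha (hkK _))
      (Finset.mul_mem_mul hb (hkK _)) hab
  refine ⟨T.image fun t => k (t • p) * t, ?_, ?_, ?_, ?_⟩
  · exact Finset.image_subset_iff.2 fun t ht => Finset.mul_mem_mul (hkK _) ht
  · simp only [separated_iff, Finset.coe_image, Set.forall_mem_image]
    intro t ht t' ht' a ha b hb hab
    rw [hret t ht t' ht' a ha b hb hab]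
  · simp only [Finset.forall_mem_image, mul_smul]
    exact fun t _ => hkU (t • p)
  · obtain ⟨b, hb⟩ := hB
    rwa [Finset.card_image_of_injOn fun t ht t' ht' htt' =>
      hret t ht t' ht' b hb b hb (congrArg (b * ·) htt'), hTcard]

end Minimal

section Expansive

variable {G X : Type*}

/-- `c` is an expansivity constant of the action: distinct points are at distance more than `c`
along some group element. -/
def IsExpansiveConstant (G X : Type*) [SMul G X] [PseudoMetricSpace X] (c : ℝ) : Prop :=
  ∀ x y : X, x ≠ y → ∃ g : G, c < dist (g • x) (g • y)

lemma IsExpansiveConstant.eq_of_forall_dist_le [SMul G X] [PseudoMetricSpace X] {c : ℝ}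
    (hc : IsExpansiveConstant G X c) {p q : X} (h : ∀ g : G, dist (g • p) (g • q) ≤ c) :
    p = q := by
  by_contra hne
  obtain ⟨g, hg⟩ := hc p q hne
  exact (h g).not_gt hg

lemma IsExpansiveConstant.exists_finset_forall_dist_le [SMul G X] [PseudoMetricSpace X]
    [CompactSpace X] [ContinuousConstSMul G X] {c : ℝ} (hc : IsExpansiveConstant G X c) {ε : ℝ}
    (hε : 0 < ε) :
    ∃ F : Finset G, ∀ p q : X, (∀ g ∈ F, dist (g • p) (g • q) ≤ c) → dist p q ≤ ε := by
  obtain ⟨F, -, hF⟩ := exists_finset_forall_dist_smul_le_mem (G := G) (I := Set.univ) (r := c)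
    (isOpen_lt continuous_dist (continuous_const (y := ε))) fun p q hpq => by
      rw [hc.eq_of_forall_dist_le fun g => hpq g trivial]
      simpa using hε
  exact ⟨F, fun p q hpq => (hF p q hpq).le⟩

variable [Group G] [PseudoMetricSpace X] [CompactSpace X] [MulAction G X]
  [ContinuousConstSMul G X] {c : ℝ}

lemma IsExpansiveConstant.asymptotic_of_forall_notMem (hc : IsExpansiveConstant G X c)
    {A : Finset G} {p q : X} (h : ∀ g ∉ A, dist (g • p) (g • q) ≤ c) : Asymptotic G p q := by
  classical
  intro ε hε
  obtain ⟨F, hF⟩ := hc.exists_finset_forall_dist_le hε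
  refine ⟨F⁻¹ * A, fun g hg => hF _ _ fun f hf => ?_⟩
  rw [← mul_smul, ← mul_smul]
  refine h (f * g) fun hfg => hg ?_
  simpa using Finset.mul_mem_mul (Finset.inv_mem_inv hf) hfg

lemma IsExpansiveConstant.exists_finset_traces (hc : IsExpansiveConstant G X c) {a b ε : ℝ}
    (hab : a + b ≤ c) (hε : 0 < ε) :
    ∃ F : Finset G, ∀ (w : G → X) (p : X), IsPseudoOrbit F a w → Traces b p w → Traces ε p w := by
  obtain ⟨F, hF⟩ := hc.exists_finset_forall_dist_le hε
  refine ⟨F, fun w p hw hp g => hF _ _ fun f hf => ?_⟩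
  calc dist (f • g • p) (f • w g) ≤ dist (f • g • p) (w (f * g)) + dist (f • w g) (w (f * g)) :=
        dist_triangle_right _ _ _
    _ ≤ b + a := by
        rw [← mul_smul]
        exact add_le_add (hp (f * g)) (hw f hf g).le
    _ ≤ c := by linarith

theorem Expansive.tmp_of_asymptotic_imp_eq (hexp : Expansive G X)
    (h : ∀ x y : X, Asymptotic G x y → x = y) : TMP G X := by
  classical
  obtain ⟨c, hc0, hc : IsExpansiveConstant G X c⟩ := hexp
  intro ε hε
  have hδ : 0 < min ε c := lt_min hε hc0
  refine ⟨min ε c, hδ, fun A => ?_⟩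
  obtain ⟨F, hFA, hF⟩ := exists_finset_forall_dist_smul_le_mem (I := (A : Set G)ᶜ) (r := min ε c)
    (isOpen_forall_dist_smul_lt (X := X) A ε) fun p q hpq => by
      obtain rfl : p = q := h p q <|
        hc.asymptotic_of_forall_notMem fun g hg => (hpq g hg).trans (min_le_right _ _)
      simpa using fun _ _ => hε
  refine ⟨A ∪ F, by simp, fun x y hxy => ⟨y, ?_, ?_⟩⟩
  · rw [supD_le_iff hδ.le] at hxy
    have hxyF : ∀ g ∈ F, dist (g • x) (g • y) ≤ min ε c := fun g hg =>
      hxy g ⟨by simp [hg], hFA hg⟩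
    refine (supD_le_iff hε.le).2 fun g hg => ?_
    rcases Finset.mem_union.1 hg with hgA | hgF
    · exact (hF x y hxyF g hgA).le
    · exact (hxyF g hgF).trans (min_le_left _ _)
  · exact (supD_le_iff hε.le).2 fun g _ => by simpa using hε.le

end Expansive

section Splicing

variable {G X : Type*} [Group G] [MulAction G X] {A B D S : Set G} {y z : X}

open Classical in
/-- The orbit of `z`, overwritten on each translate `D * {s}` with `s ∈ S` by `d * s ↦ d • y`: the
configuration obtained from `z` by pasting the `D`-pattern of `y` at every site of `S`. The pasted
values depend on choices unless `S` is `D`-separated. -/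
noncomputable def spliced (D S : Set G) (y z : X) (g : G) : X :=
  if hg : g ∈ D * S then (Set.mem_mul.1 hg).choose • y else g • z

lemma spliced_mul (hsep : Separated D S) {d s : G} (hd : d ∈ D) (hs : s ∈ S) :
    spliced D S y z (d * s) = d • y := by
  have hds : d * s ∈ D * S := Set.mul_mem_mul hd hs
  obtain ⟨hd', s', hs', heq⟩ := (Set.mem_mul.1 hds).choose_spec
  rw [spliced, dif_pos hds]
  obtain rfl := hsep.eq_of_mul_eq hs' hs hd' hd heq
  rw [mul_right_cancel heq]

lemma spliced_of_notMem {g : G} (hg : g ∉ D * S) : spliced D S y z g = g • z :=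
  dif_neg hg

lemma spliced_insert_of_notMem {v g : G} (hsep : Separated D (insert v S)) (hg : g ∉ D * {v}) :
    spliced D (insert v S) y z g = spliced D S y z g := by
  by_cases hgS : g ∈ D * S
  · obtain ⟨d, hd, s, hs, rfl⟩ := hgS
    rw [spliced_mul hsep hd (Set.mem_insert_of_mem v hs),
      spliced_mul (hsep.mono subset_rfl (Set.subset_insert v S)) hd hs]
  · have hgv : g ∉ D * insert v S := by
      rw [Set.insert_eq, Set.mul_union]
      exact fun h => h.elim hg hgS
    rw [spliced_of_notMem hgS, spliced_of_notMem hgv]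

variable [PseudoMetricSpace X]

lemma isPseudoOrbit_spliced {F : Finset G} {η : ℝ} (hη : 0 < η) (hAD : A ⊆ D)
    (hFA : ∀ f ∈ F, ∀ g, f * g ∈ A → g ∈ D) (hDB : D ⊆ B) (hFD : ∀ f ∈ F, ∀ d ∈ D, f * d ∈ B)
    (hsep : Separated B S) (hyz : ∀ s ∈ S, ∀ b ∈ B \ A, dist (b • y) ((b * s) • z) < η) :
    IsPseudoOrbit F η (spliced D S y z) := by
  intro f hf g
  have hsepD : Separated D S := hsep.mono hDB subset_rfl
  by_cases hg : g ∈ D * S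
  · obtain ⟨d, hd, s, hs, rfl⟩ := hg
    rw [spliced_mul hsepD hd hs, ← mul_smul, ← mul_assoc]
    by_cases hfd : f * d ∈ D
    · rwa [spliced_mul hsepD hfd hs, dist_self]
    · have hfdB : f * d ∈ B := hFD f hf d hd
      rw [spliced_of_notMem (hsep.mul_notMem_mul subset_rfl hDB hfdB hs (.inl hfd))]
      exact hyz s hs _ ⟨hfdB, fun h => hfd (hAD h)⟩
  · rw [spliced_of_notMem hg, ← mul_smul]
    by_cases hfg : f * g ∈ D * S
    · obtain ⟨d, hd, s, hs, hds⟩ := hfg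
      have hdA : d ∉ A := fun h => by
        have hgs : g * s⁻¹ ∈ D := hFA f hf _ (by rwa [← mul_assoc, ← hds, mul_inv_cancel_right])
        exact hg ⟨g * s⁻¹, hgs, s, hs, inv_mul_cancel_right g s⟩
      rw [← hds, spliced_mul hsepD hd hs, dist_comm]
      exact hyz s hs d ⟨hDB hd, hdA⟩
    · rwa [spliced_of_notMem hfg, dist_self]

lemma IsMemorySet.exists_traces_spliced_insert [BoundedSpace X] {D B : Finset G} {ε δ η κ : ℝ}
    (hmem : IsMemorySet G X ε δ D B) (hε : 0 ≤ ε) (hη : 0 ≤ η) (hδ : η + κ ≤ δ) {v : G} (hv : v ∉ S)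
    (hsep : Separated (B : Set G) (insert v S))
    (hyz : ∀ b ∈ B, b ∉ D → dist (b • y) ((b * v) • z) ≤ η) {p : X}
    (hp : Traces κ p (spliced D S y z)) :
    ∃ q : X, Traces (ε + κ) q (spliced D (insert v S) y z) := by
  have hsepD : Separated (D : Set G) (insert v S) := hsep.mono hmem.1 subset_rfl
  have hclose : ∀ b ∈ (B : Set G) \ D, dist (b • y) (b • v • p) ≤ δ := by
    intro b hb
    have hbv : dist ((b * v) • p) ((b * v) • z) ≤ κ := by
      have hbD : b * v ∉ (D : Set G) * S := hsep.mul_notMem_mul (Set.subset_insert v S) hmem.1 hb.1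
        (Set.mem_insert v S) (.inl hb.2)
      rw [← spliced_of_notMem (y := y) (z := z) hbD]
      exact hp (b * v)
    have hby := hyz b hb.1 hb.2
    rw [← mul_smul]
    linarith [dist_triangle_right (b • y) ((b * v) • p) ((b * v) • z)]
  have hκ : 0 ≤ κ := dist_nonneg.trans (hp 1)
  have hδ0 : 0 ≤ δ := (add_nonneg hη hκ).trans hδ
  obtain ⟨u, huy, hup⟩ := hmem.2 y (v • p) ((supD_le_iff hδ0).2 hclose)
  rw [supD_le_iff hε] at huy hup
  refine ⟨v⁻¹ • u, fun g => ?_⟩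
  by_cases hg : g ∈ (D : Set G) * {v}
  · obtain ⟨d, hd, _, rfl, rfl⟩ := hg
    have hdu := huy d (hmem.1 hd)
    rw [spliced_mul hsepD hd (Set.mem_insert _ S), mul_smul, smul_inv_smul, dist_comm]
    linarith
  · have hgD : g * v⁻¹ ∉ D := fun h => hg ⟨g * v⁻¹, h, v, rfl, inv_mul_cancel_right g v⟩
    have hgu := hup (g * v⁻¹) ⟨trivial, hgD⟩
    rw [mul_smul, inv_smul_smul, mul_smul] at hgu
    rw [spliced_insert_of_notMem hsepD hg]
    linarith [dist_triangle_left (g • v⁻¹ • u) (spliced D S y z g) (g • p), hp g]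

end Splicing

section Redirection

lemma exists_finset_mem_of_mul_mem {G : Type*} [Group G] (F A : Finset G) :
    ∃ D : Finset G, 1 ∈ D ∧ A ⊆ D ∧ ∀ f ∈ F, ∀ g, f * g ∈ A → g ∈ D := by
  classical
  refine ⟨insert 1 (A ∪ F⁻¹ * A), Finset.mem_insert_self 1 _,
    Finset.subset_union_left.trans (Finset.subset_insert 1 _), fun f hf g hfg => ?_⟩
  have hg := Finset.mul_mem_mul (Finset.inv_mem_inv hf) hfg
  rw [inv_mul_cancel_left] at hg
  exact Finset.mem_insert_of_mem (Finset.mem_union_right A hg)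

variable {G X : Type*} [Group G] [PseudoMetricSpace X] [MulAction G X] {x y : X}

theorem TMP.exists_traces_spliced [CompactSpace X] [ContinuousConstSMul G X] (htmp : TMP G X)
    (hexp : Expansive G X) (hxy : Asymptotic G x y) {ε : ℝ} (hε : 0 < ε) :
    ∃ η > 0, ∃ D B : Finset G, 1 ∈ D ∧ D ⊆ B ∧ ∀ (z : X) (S : Finset G), Separated (B : Set G) S →
      (∀ s ∈ S, ∀ b ∈ B, dist (b • x) (b • s • z) < η) →
        ∃ p : X, Traces ε p (spliced (D : Set G) S y z) := by
  classical
  obtain ⟨c, hc0, hc : IsExpansiveConstant G X c⟩ := hexp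
  obtain ⟨δ, hδ0, hmem⟩ := htmp (c / 4) (by positivity)
  obtain ⟨κ, hκ0, hκε, hκc, hκδ⟩ : ∃ κ > 0, κ ≤ ε ∧ κ ≤ c / 4 ∧ κ ≤ δ / 2 :=
    ⟨min ε (min (c / 4) (δ / 2)), by positivity, by simp, by simp, by simp⟩
  obtain ⟨F, hF⟩ := hc.exists_finset_traces (show κ + c / 2 ≤ c by linarith) hκ0
  obtain ⟨A, hA⟩ := hxy (κ / 2) (by positivity)
  obtain ⟨D, h1D, hAD, hFA⟩ := exists_finset_mem_of_mul_mem F A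
  obtain ⟨B₀, hB₀⟩ := hmem D
  obtain ⟨B, hB₀B, hFD⟩ : ∃ B : Finset G, B₀ ⊆ B ∧ ∀ f ∈ F, ∀ d ∈ D, f * d ∈ B :=
    ⟨B₀ ∪ F * D, Finset.subset_union_left, fun f hf d hd =>
      Finset.mem_union_right B₀ (Finset.mul_mem_mul hf hd)⟩
  have hDB : D ⊆ B := (Finset.coe_subset.1 hB₀.1).trans hB₀B
  refine ⟨κ / 2, by positivity, D, B, h1D, hDB, fun z S hsep hz => ?_⟩
  have hyz : ∀ s, (∀ b ∈ B, dist (b • x) (b • s • z) < κ / 2) →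
      ∀ b ∈ B, b ∉ A → dist (b • y) ((b * s) • z) < κ := by
    intro s hs b hb hbA
    rw [mul_smul]
    linarith [dist_triangle_left (b • y) (b • s • z) (b • x), hA b hbA, hs b hb]
  suffices ∃ p : X, Traces κ p (spliced (D : Set G) S y z) from
    this.imp fun p hp g => (hp g).trans hκε
  induction S using Finset.induction_on with
  | empty => exact ⟨z, fun g => by simpa [spliced] using hκ0.le⟩
  | insert v S hv ih =>
    rw [Finset.coe_insert] at hsep ⊢
    obtain ⟨p, hp⟩ := ih (hsep.mono subset_rfl (Set.subset_insert v _)) fun s hs =>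
      hz s (Finset.mem_insert_of_mem hs)
    obtain ⟨q, hq⟩ := hB₀.exists_traces_spliced_insert (by positivity) hκ0.le (by linarith) hv
      (hsep.mono (Finset.coe_subset.2 hB₀B) subset_rfl)
      (fun b hb hbD => (hyz v (hz v (Finset.mem_insert_self v S)) b (hB₀B hb)
        fun hbA => hbD (hAD hbA)).le) hp
    have hq' : Traces (c / 2) q (spliced (D : Set G) (insert v S) y z) := fun g =>
      (hq g).trans (by linarith)
    refine ⟨q, hF _ q (isPseudoOrbit_spliced hκ0 (Finset.coe_subset.2 hAD) hFA
      (Finset.coe_subset.2 hDB) hFD hsep fun s hs b hb => ?_) hq'⟩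
    exact hyz s (hz s (by simpa using hs)) b hb.1 hb.2

/-- Visits of an orbit to `U` at `B`-separated times can be redirected independently of each other:
prescribing any subset `S` of such a set of times, some point is `ε`-close to `y` at the times in
`S` and `ε`-close to `x` at the remaining ones. -/
def IndependentlyRedirectable (U : Set X) (B : Finset G) (x y : X) (ε : ℝ) : Prop :=
  ∀ (z : X) (V S : Finset G), Separated (B : Set G) V → (∀ s ∈ V, s • z ∈ U) → S ⊆ V →
    ∃ p : X, (∀ s ∈ S, dist (s • p) y < ε) ∧ ∀ s ∈ V, s ∉ S → dist (s • p) x < ε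

theorem TMP.exists_independentlyRedirectable [CompactSpace X] [ContinuousConstSMul G X]
    (htmp : TMP G X) (hexp : Expansive G X) (hxy : Asymptotic G x y) {ε : ℝ} (hε : 0 < ε) :
    ∃ (U : Set X) (B : Finset G), IsOpen U ∧ x ∈ U ∧ B.Nonempty ∧
      IndependentlyRedirectable U B x y ε := by
  obtain ⟨η, hη, D, B, h1D, hDB, hsplice⟩ := htmp.exists_traces_spliced hexp hxy (half_pos hε)
  have h1B : (1 : G) ∈ B := hDB h1D
  refine ⟨{p | ∀ b ∈ B, dist (b • x) (b • p) < min η (ε / 2)}, B,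
    (isOpen_forall_dist_smul_lt B _).preimage (Continuous.prodMk_right x),
    fun b _ => by simpa using ⟨hη, hε⟩, ⟨1, h1B⟩, fun z V S hV hz hSV => ?_⟩
  have hSV' : (S : Set G) ⊆ V := Finset.coe_subset.2 hSV
  have hS : Separated (B : Set G) S := hV.mono subset_rfl hSV'
  have hDB' : (D : Set G) ⊆ B := Finset.coe_subset.2 hDB
  obtain ⟨p, hp⟩ := hsplice z S hS fun s hs b hb => (hz s (hSV hs) b hb).trans_le (min_le_left _ _)
  refine ⟨p, fun s hs => ?_, fun s hs hsS => ?_⟩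
  · have hps := hp (1 * s)
    rw [spliced_mul (hS.mono hDB' subset_rfl) h1D hs, one_smul, one_mul] at hps
    linarith
  · have hps := hp (1 * s)
    rw [spliced_of_notMem (hV.mul_notMem_mul hSV' hDB' h1B hs (.inr hsS)), one_mul] at hps
    have hzs := (hz s hs 1 h1B).trans_le (min_le_right _ _)
    rw [one_smul, one_smul] at hzs
    linarith [dist_triangle_right (s • p) x (s • z)]

lemma IndependentlyRedirectable.exists_redirected_iUnion [DecidableEq G] {U : Set X}
    {B R V : Finset G} {ε : ℝ} (h : IndependentlyRedirectable U B x y ε) (hB : B.Nonempty)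
    (hV : Separated ((B * R : Finset G) : Set G) V) {z : X} {Q C : G → Finset G}
    (hQR : ∀ v, Q v ⊆ R) (hQ : ∀ v, Separated (B : Set G) (Q v))
    (hQU : ∀ v, ∀ q ∈ Q v, q • v • z ∈ U) (hCQ : ∀ v, C v ⊆ Q v) :
    ∃ p : X, (∀ v ∈ V, ∀ q ∈ C v, dist ((q * v) • p) y < ε) ∧
      ∀ v ∈ V, ∀ q ∈ Q v, q ∉ C v → dist ((q * v) • p) x < ε := by
  obtain ⟨sites, mem_sites⟩ : ∃ sites : (G → Finset G) → Finset G,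
      ∀ P g, g ∈ sites P ↔ ∃ v ∈ V, ∃ q ∈ P v, q * v = g :=
    ⟨fun P => V.biUnion fun v => P v * {v}, by simp [Finset.mem_mul]⟩
  rw [Finset.coe_mul] at hV
  have hsites : (sites Q : Set G) = ⋃ v ∈ (V : Set G), (Q v : Set G) * {v} := by
    ext g
    simp only [Finset.mem_coe, mem_sites, Set.mem_iUnion₂, Set.mul_singleton, Set.mem_image,
      exists_prop]
  have hsep : Separated (B : Set G) (sites Q) := by
    rw [hsites]
    exact hV.iUnion_mul_singleton (fun v _ => Finset.coe_subset.2 (hQR v)) fun v _ => hQ v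
  have hvisit : ∀ g ∈ sites Q, g • z ∈ U := fun g hg => by
    obtain ⟨v, -, q, hq, rfl⟩ := (mem_sites Q g).1 hg
    simpa only [mul_smul] using hQU v q hq
  have hsub : sites C ⊆ sites Q := fun g hg => by
    obtain ⟨v, hv, q, hq, rfl⟩ := (mem_sites C g).1 hg
    exact (mem_sites Q _).2 ⟨v, hv, q, hCQ v hq, rfl⟩
  obtain ⟨p, hpy, hpx⟩ := h z (sites Q) (sites C) hsep hvisit hsub
  refine ⟨p, fun v hv q hq => hpy _ ((mem_sites C _).2 ⟨v, hv, q, hq, rfl⟩),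
    fun v hv q hq hqC => hpx _ ((mem_sites Q _).2 ⟨v, hv, q, hq, rfl⟩) fun hqv => hqC ?_⟩
  obtain ⟨w, hw, r, hr, hrw⟩ := (mem_sites C _).1 hqv
  obtain ⟨b, hb⟩ := hB
  have hbr : b * r ∈ (B : Set G) * R :=
    Set.mul_mem_mul hb (Finset.mem_coe.2 (hQR w (hCQ w hr)))
  have hbq : b * q ∈ (B : Set G) * R := Set.mul_mem_mul hb (Finset.mem_coe.2 (hQR v hq))
  obtain rfl := hV.eq_of_mul_eq hw hv hbr hbq (by rw [mul_assoc, mul_assoc, hrw])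
  rwa [← mul_right_cancel hrw]

theorem not_independentlyRedirectable [CompactSpace X] [ContinuousConstSMul G X] [Infinite G]
    [MulAction.IsMinimal G X] {U : Set X} (hU : IsOpen U) (hxU : x ∈ U) {B : Finset G}
    (hB : B.Nonempty) {ε : ℝ} (hε : 0 < ε) (hxy : 4 * ε ≤ dist x y) :
    ¬ IndependentlyRedirectable U B x y ε := by
  classical
  intro h
  obtain ⟨R, hR, hret⟩ := exists_finset_separated_returns (G := G) hU ⟨x, hxU⟩ hB
  choose Q hQR hQsep hQU hcard using fun v : G => hret (v • x)
  set H : Finset G := (B * R)⁻¹ * (B * R)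
  obtain ⟨W, hW⟩ := exists_finset_forall_exists_smul_mem (G := G)
    ((isOpen_forall_dist_smul_lt (R * H) ε).preimage (Continuous.prodMk_right x))
    ⟨x, fun b _ => by simpa using hε⟩
  obtain ⟨V, hVsep, hVW⟩ := exists_separated_cover (hB.mul hR) W
  -- `C v` holds the visits to be redirected to `y`; it differs from every pattern of near visits to
  -- `y` that the orbit of `x` shows along a translate `Q v * k` with `k ∈ H`.
  choose C hCQ hC using fun v => exists_subset_forall_ne (hcard v)
    fun k => {q ∈ Q v | dist ((q * k) • x) y < 2 * ε}
  obtain ⟨p, hpy, hpx⟩ := h.exists_redirected_iUnion hB hVsep hQR hQsep hQU hCQ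
  obtain ⟨g, hgW, hgp⟩ := hW p
  obtain ⟨k, hk, hkV⟩ := hVW g hgW
  have hxp : ∀ q ∈ Q (k * g), dist ((q * k) • x) ((q * (k * g)) • p) < ε := fun q hq => by
    simpa only [smul_smul, mul_assoc] using
      hgp (q * k) (Finset.mul_mem_mul (hQR _ hq) hk)
  refine hC (k * g) k hk (Finset.ext fun q => ?_)
  rw [Finset.mem_filter]
  refine ⟨fun hq => ⟨hCQ _ hq, ?_⟩, fun ⟨hq, hqy⟩ => ?_⟩
  · have hpq := hpy _ hkV q hq
    linarith [dist_triangle ((q * k) • x) ((q * (k * g)) • p) y, hxp q (hCQ _ hq)]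
  · by_contra hqC
    have hpq := hpx _ hkV q hq hqC
    linarith [hqy, dist_triangle ((q * k) • x) ((q * (k * g)) • p) x, hxp q hq,
      dist_triangle_left x y ((q * k) • x)]

end Redirection

theorem stmt7_general (G X : Type*) [Group G] [Infinite G] [MetricSpace X] [CompactSpace X]
    [MulAction G X] [ContinuousConstSMul G X] (hmin : MinimalAction G X) (hexp : Expansive G X) :
    TMP G X ↔ ∀ x y : X, Asymptotic G x y → x = y := by
  refine ⟨fun htmp x y hxy => by_contra fun hne => ?_, hexp.tmp_of_asymptotic_imp_eq⟩
  have hε : 0 < dist x y / 4 := div_pos (dist_pos.2 hne) four_pos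
  have := hmin.isMinimal
  obtain ⟨U, B, hU, hxU, hB, hredirect⟩ := htmp.exists_independentlyRedirectable hexp hxy hε
  exact not_independentlyRedirectable hU hxU hB hε (by linarith) hredirect

/-- A minimal expansive action of a countably infinite group on a compact
metrizable space has the topological Markov property iff it has no off-diagonal asymptotic
pairs. -/
theorem stmt7 (G X : Type*) [Group G] [Countable G] [Infinite G]
    [MetricSpace X] [CompactSpace X] [MulAction G X]
    (hcont : ∀ g : G, Continuous fun x : X => g • x)
    (hmin : MinimalAction G X) (hexp : Expansive G X) :
    TMP G X ↔ ∀ x y : X, Asymptotic G x y → x = y := by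
  have : ContinuousConstSMul G X := ⟨hcont⟩
  exact stmt7_general G X hmin hexp
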